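/- arXiv:1512.08237 — 3 statements merged into one kernel-verified Lean document; each statement's English description precedes it below -/
import Mathlib

section
/- Let N and ξ₁ be real numbers with 0 < ξ₁ < N. Then the principal value integral p.v.∫_{-N}^{N} 1/(ξ₁² - t²) dt exists and equals (1/ξ₁) · ln((N + ξ₁)/(N - ξ₁)), where the principal value is defined as the limit as ε → 0+ of the integral over [-N, N] with the intervals (ξ₁ - ε, ξ₁ + ε) and (-ξ₁ - ε, -ξ₁ + ε) removed. -/
open MeasureTheory Filter Set

/-!
By partial fractions `1 / (ξ² - t²) = (1 / (2ξ)) (1 / (t + ξ) - 1 / (t - ξ))`, so it suffices to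
treat one simple pole `c` at a time. There the logarithmic contributions of the two ends of the
window `(c - ε, c + ε)` cancel exactly, and removing the window around the other pole is
harmless because `1 / (t - c)` is integrable near it.
-/

open Topology Metric

theorem tendsto_setIntegral_sdiff_of_tendsto_measure_zero {α ι E : Type*} [MeasurableSpace α]
    [NormedAddCommGroup E] [NormedSpace ℝ E] {μ : Measure α} {l : Filter ι} {f : α → E}
    {s t : ι → Set α} {u : Set α} {L : E} (hs : ∀ᶠ i in l, IntegrableOn f (s i) μ)
    (ht : ∀ i, MeasurableSet (t i)) (hu : IntegrableOn f u μ) (htu : ∀ᶠ i in l, t i ⊆ u)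
    (hμ : Tendsto (fun i => μ (t i)) l (𝓝 0))
    (hL : Tendsto (fun i => ∫ x in s i, f x ∂μ) l (𝓝 L)) :
    Tendsto (fun i => ∫ x in s i \ t i, f x ∂μ) l (𝓝 L) := by
  have h_inter : Tendsto (fun i => ∫ x in s i ∩ t i, f x ∂μ) l (𝓝 0) := by
    have h_restrict : Tendsto (fun i => μ.restrict u (s i ∩ t i)) l (𝓝 0) :=
      tendsto_of_tendsto_of_tendsto_of_le_of_le tendsto_const_nhds hμ (fun _ => zero_le)
        fun i => (Measure.restrict_apply_le u _).trans (measure_mono inter_subset_right)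
    refine (hu.tendsto_setIntegral_nhds_zero h_restrict).congr' ?_
    filter_upwards [htu] with i hi
    rw [Measure.restrict_restrict_of_subset (inter_subset_right.trans hi)]
  rw [← sub_zero L]
  refine (hL.sub h_inter).congr' ?_
  filter_upwards [hs] with i hi
  rw [sub_eq_iff_eq_add', integral_inter_add_sdiff (ht i) hi]

theorem integrableOn_inv_sub_sdiff_ball (a b c : ℝ) {ε : ℝ} (hε : 0 < ε) :
    IntegrableOn (fun t => (t - c)⁻¹) (Ioo a b \ ball c ε) := by
  have h_cont : ContinuousOn (fun t => (t - c)⁻¹) (Icc a b \ ball c ε) := by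
    refine ContinuousOn.inv₀ (by fun_prop) fun t ht h => ht.2 ?_
    rw [sub_eq_zero.1 h]
    exact mem_ball_self hε
  exact (h_cont.integrableOn_compact (isCompact_Icc.diff isOpen_ball)).mono_set
    (sdiff_subset_sdiff_left Ioo_subset_Icc_self)

theorem setIntegral_Ioo_inv_sub {a b c : ℝ} (hab : a ≤ b) (hc : c ∉ Icc a b) :
    ∫ t in Ioo a b, (t - c)⁻¹ = Real.log |(b - c) / (a - c)| := by
  have h_zero : (0 : ℝ) ∉ uIcc (a - c) (b - c) := by
    rw [uIcc_of_le (by linarith)]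
    exact fun h => hc ⟨by linarith [h.1], by linarith [h.2]⟩
  rw [← integral_Ioc_eq_integral_Ioo, ← intervalIntegral.integral_of_le hab,
    intervalIntegral.integral_comp_sub_right (fun t => t⁻¹), integral_inv h_zero, Real.log_abs]

theorem Ioo_sdiff_ball_eq_union {a b c ε : ℝ} (hε : 0 < ε) (ha : a < c - ε) (hb : c + ε < b) :
    Ioo a b \ ball c ε = Ioc a (c - ε) ∪ Ico (c + ε) b := by
  ext t
  simp only [Real.ball_eq_Ioo, Set.mem_sdiff, mem_Ioo, mem_union, mem_Ioc, mem_Ico]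
  grind

theorem setIntegral_inv_sub_sdiff_ball {a b c ε : ℝ} (hab : a ≤ b) (hε : 0 < ε)
    (ha : ε < |a - c|) (hb : ε < |b - c|) :
    ∫ t in Ioo a b \ ball c ε, (t - c)⁻¹ = Real.log |(b - c) / (a - c)| := by
  by_cases hc : c ∈ Icc a b
  · rw [abs_of_nonpos (by linarith [hc.1])] at ha
    rw [abs_of_nonneg (by linarith [hc.2])] at hb
    have h_split := Ioo_sdiff_ball_eq_union hε (a := a) (b := b) (c := c)
      (by linarith) (by linarith)
    have h_int := integrableOn_inv_sub_sdiff_ball a b c hε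
    rw [h_split] at h_int ⊢
    have h_disj : Disjoint (Ioc a (c - ε)) (Ico (c + ε) b) :=
      Set.disjoint_left.2 fun t ht ht' => by linarith [ht.2, ht'.1]
    have h_cancel : (c - ε - c) / (a - c) * ((b - c) / (c + ε - c)) = -((b - c) / (a - c)) := by
      have : a - c ≠ 0 := by linarith
      rw [sub_sub_cancel_left, add_sub_cancel_left]
      field_simp
    rw [setIntegral_union h_disj measurableSet_Ico h_int.left_of_union h_int.right_of_union,
      integral_Ioc_eq_integral_Ioo, integral_Ico_eq_integral_Ioo,
      setIntegral_Ioo_inv_sub (by linarith) fun h => by linarith [h.2],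
      setIntegral_Ioo_inv_sub (by linarith) fun h => by linarith [h.1],
      ← Real.log_mul ?_ ?_, ← abs_mul, h_cancel, abs_neg]
    · exact abs_ne_zero.2 (div_ne_zero (by linarith) (by linarith))
    · exact abs_ne_zero.2 (div_ne_zero (by linarith) (by linarith))
  · have h_disj : Disjoint (Ioo a b) (ball c ε) := by
      rw [Real.ball_eq_Ioo, Set.disjoint_left]
      grind
    rw [h_disj.sdiff_eq_left, setIntegral_Ioo_inv_sub hab hc]

theorem tendsto_setIntegral_inv_sub_sdiff_ball {a b c : ℝ} (hab : a ≤ b) (ha : a ≠ c)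
    (hb : b ≠ c) :
    Tendsto (fun ε => ∫ t in Ioo a b \ ball c ε, (t - c)⁻¹) (𝓝[>] 0)
      (𝓝 (Real.log |(b - c) / (a - c)|)) := by
  refine tendsto_const_nhds.congr' ?_
  filter_upwards [Ioo_mem_nhdsGT (abs_pos.2 (sub_ne_zero.2 ha)),
    Ioo_mem_nhdsGT (abs_pos.2 (sub_ne_zero.2 hb))] with ε hεa hεb
  exact (setIntegral_inv_sub_sdiff_ball hab hεa.1 hεa.2 hεb.2).symm

theorem tendsto_setIntegral_inv_sub_sdiff_ball_union_ball {a b c d : ℝ} (hab : a ≤ b)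
    (ha : a ≠ c) (hb : b ≠ c) (hdc : d ≠ c) :
    Tendsto (fun ε => ∫ t in Ioo a b \ (ball c ε ∪ ball d ε), (t - c)⁻¹) (𝓝[>] 0)
      (𝓝 (Real.log |(b - c) / (a - c)|)) := by
  simp only [← Set.sdiff_sdiff]
  obtain ⟨u, hu, h_int⟩ : IntegrableAtFilter (fun t => (t - c)⁻¹) (𝓝 d) := by
    rw [← isOpen_compl_singleton.nhdsWithin_eq hdc]
    refine ContinuousOn.integrableAt_nhdsWithin ?_ (measurableSet_singleton c).compl hdc
    exact ContinuousOn.inv₀ (by fun_prop) fun t ht => sub_ne_zero.2 ht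
  have h_vol : Tendsto (fun ε => volume (ball d ε)) (𝓝[>] 0) (𝓝 0) := by
    simpa only [thickening_singleton, measure_singleton] using
      tendsto_measure_thickening_of_isClosed (μ := volume) (s := {d})
        ⟨1, one_pos, by simp⟩ isClosed_singleton
  refine tendsto_setIntegral_sdiff_of_tendsto_measure_zero ?_ (fun _ => measurableSet_ball) h_int
    ?_ h_vol (tendsto_setIntegral_inv_sub_sdiff_ball hab ha hb)
  · filter_upwards [self_mem_nhdsWithin] with ε hε
    exact integrableOn_inv_sub_sdiff_ball a b c hε
  · obtain ⟨r, hr, hru⟩ := Metric.mem_nhds_iff.1 hu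
    filter_upwards [Ioo_mem_nhdsGT hr] with ε hε
    exact (ball_subset_ball hε.2.le).trans hru

theorem one_div_sq_sub_sq_eq {K : Type*} [Field K] [NeZero (2 : K)] {ξ t : K} (hξ : ξ ≠ 0)
    (h₁ : t ≠ ξ) (h₂ : t ≠ -ξ) :
    1 / (ξ ^ 2 - t ^ 2) = 1 / (2 * ξ) * ((t - -ξ)⁻¹ - (t - ξ)⁻¹) := by
  have h_sub : t - ξ ≠ 0 := sub_ne_zero.2 h₁
  have h_add : t - -ξ ≠ 0 := sub_ne_zero.2 h₂
  rw [show ξ ^ 2 - t ^ 2 = -((t - -ξ) * (t - ξ)) by ring]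
  field_simp
  ring

theorem setIntegral_one_div_sq_sub_sq_sdiff_ball_union_ball (a b : ℝ) {ξ ε : ℝ}
    (hξ : ξ ≠ 0) (hε : 0 < ε) :
    ∫ t in Ioo a b \ (ball ξ ε ∪ ball (-ξ) ε), 1 / (ξ ^ 2 - t ^ 2) =
      1 / (2 * ξ) * ((∫ t in Ioo a b \ (ball ξ ε ∪ ball (-ξ) ε), (t - -ξ)⁻¹) -
        ∫ t in Ioo a b \ (ball ξ ε ∪ ball (-ξ) ε), (t - ξ)⁻¹) := by
  have h_int (c : ℝ) (hc : ball c ε ⊆ ball ξ ε ∪ ball (-ξ) ε) :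
      IntegrableOn (fun t => (t - c)⁻¹) (Ioo a b \ (ball ξ ε ∪ ball (-ξ) ε)) :=
    (integrableOn_inv_sub_sdiff_ball a b c hε).mono_set (sdiff_subset_sdiff_right hc)
  rw [← integral_sub (h_int (-ξ) subset_union_right) (h_int ξ subset_union_left),
    ← integral_const_mul]
  refine setIntegral_congr_fun (by measurability) fun t ht => one_div_sq_sub_sq_eq hξ ?_ ?_
  · rintro rfl
    exact ht.2 (.inl (mem_ball_self hε))
  · rintro rfl
    exact ht.2 (.inr (mem_ball_self hε))

theorem pv_integral_one_div_sq_sub_sq_general {a b ξ : ℝ} (hξ : ξ ≠ 0) (hab : a ≤ b)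
    (ha : |a| ≠ |ξ|) (hb : |b| ≠ |ξ|) :
    Tendsto (fun ε => ∫ t in Ioo a b \ (ball ξ ε ∪ ball (-ξ) ε), 1 / (ξ ^ 2 - t ^ 2)) (𝓝[>] 0)
      (𝓝 (1 / (2 * ξ) *
        (Real.log |(b + ξ) / (a + ξ)| - Real.log |(b - ξ) / (a - ξ)|))) := by
  obtain ⟨ha₁, ha₂⟩ := not_or.1 (mt abs_eq_abs.2 ha)
  obtain ⟨hb₁, hb₂⟩ := not_or.1 (mt abs_eq_abs.2 hb)
  have h_neg : -ξ ≠ ξ := neg_ne_self.2 hξ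
  have h_right := tendsto_setIntegral_inv_sub_sdiff_ball_union_ball hab ha₁ hb₁ h_neg
  have h_left := tendsto_setIntegral_inv_sub_sdiff_ball_union_ball hab ha₂ hb₂ h_neg.symm
  simp only [union_comm (ball (-ξ) _)] at h_left
  rw [← sub_neg_eq_add b, ← sub_neg_eq_add a]
  refine ((h_left.sub h_right).const_mul (1 / (2 * ξ))).congr' ?_
  filter_upwards [self_mem_nhdsWithin] with ε hε
  exact (setIntegral_one_div_sq_sub_sq_sdiff_ball_union_ball a b hξ hε).symm

theorem log_abs_div_sub_log_abs_div (x y : ℝ) :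
    Real.log |(x + y) / (-x + y)| - Real.log |(x - y) / (-x - y)| =
      2 * Real.log ((x + y) / (x - y)) := by
  have h_left : (x + y) / (-x + y) = -((x + y) / (x - y)) := by
    rw [neg_add_eq_sub, ← neg_sub, div_neg]
  have h_right : (x - y) / (-x - y) = -((x + y) / (x - y))⁻¹ := by
    rw [← neg_add', div_neg, inv_div]
  rw [h_left, h_right, abs_neg, abs_neg, Real.log_abs, Real.log_abs, Real.log_inv]
  ring

/-- For `0 < ξ₁ < N`, the principal value integral `p.v.∫_{-N}^{N} 1/(ξ₁² - t²) dt`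
(the limit as `ε → 0+` of the integral over `[-N, N]` with the symmetric intervals
`(ξ₁ - ε, ξ₁ + ε)` and `(-ξ₁ - ε, -ξ₁ + ε)` removed) exists and equals
`(1/ξ₁) · ln((N + ξ₁)/(N - ξ₁))`. -/
theorem pv_integral_one_div_sq_sub_sq (N ξ₁ : ℝ) (h0 : 0 < ξ₁) (hN : ξ₁ < N) :
    Tendsto (fun ε : ℝ =>
        ∫ t in Ioo (-N) N \ (Ioo (ξ₁ - ε) (ξ₁ + ε) ∪ Ioo (-ξ₁ - ε) (-ξ₁ + ε)),
          1 / (ξ₁ ^ 2 - t ^ 2))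
      (nhdsWithin 0 (Ioi 0)) (nhds ((1 / ξ₁) * Real.log ((N + ξ₁) / (N - ξ₁)))) := by
  have h_val : 1 / (2 * ξ₁) *
      (Real.log |(N + ξ₁) / (-N + ξ₁)| - Real.log |(N - ξ₁) / (-N - ξ₁)|) =
        1 / ξ₁ * Real.log ((N + ξ₁) / (N - ξ₁)) := by
    rw [log_abs_div_sub_log_abs_div]
    ring
  simpa only [h_val, Real.ball_eq_Ioo] using pv_integral_one_div_sq_sub_sq_general h0.ne'
    (show -N ≤ N by linarith) (by grind) (by grind)
end

section
/- Let N and ξ₁ be real numbers with 0 < ξ₁ < N. Then the principal value integral T_{6,N}(ξ₁) = p.v.∫_{-N}^{N} t⁶/(ξ₁² - t²) dt exists and equals -(2/5)N⁵ - (2/3)ξ₁²N³ - 2ξ₁⁴N + ξ₁⁵ · ln((N + ξ₁)/(N - ξ₁)). -/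
open MeasureTheory Filter Set

open scoped Topology

/-!
Polynomial division and partial fractions give `t ^ (2 * n) / (a ^ 2 - t ^ 2)` an antiderivative
made of a polynomial and a multiple of `log |t + a| - log |t - a|`. Near `c` the singular term
`log |t - c|` takes equal values at `c + ε` and `c - ε`, so the boundary terms produced by excising
`(c - ε, c + ε)` cancel in the limit, and the principal value is the difference of the
antiderivative at the two outer endpoints, as if there were no singularity.
-/

section SymmContinuousAt

variable {E : Type*} [NormedAddCommGroup E] {F G : ℝ → E} {c : ℝ}

/-- Symmetric continuity of `F` at `c`: the jump `F (c + ε) - F (c - ε)` vanishes as `ε → 0⁺`.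
This is what a primitive must satisfy at a pole for the pole not to contribute to the principal
value. -/
def SymmContinuousAt (F : ℝ → E) (c : ℝ) : Prop :=
  Tendsto (fun ε => F (c + ε) - F (c - ε)) (𝓝[>] 0) (𝓝 0)

namespace SymmContinuousAt

lemma of_continuousAt (hF : ContinuousAt F c) : SymmContinuousAt F c := by
  have hadd : Tendsto (fun ε => F (c + ε)) (𝓝 0) (𝓝 (F c)) :=
    hF.tendsto.comp (Continuous.tendsto' (by fun_prop) _ _ (add_zero c))
  have hsub : Tendsto (fun ε => F (c - ε)) (𝓝 0) (𝓝 (F c)) :=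
    hF.tendsto.comp (Continuous.tendsto' (by fun_prop) _ _ (sub_zero c))
  simpa only [SymmContinuousAt, sub_self] using (hadd.sub hsub).mono_left nhdsWithin_le_nhds

lemma sub (hF : SymmContinuousAt F c) (hG : SymmContinuousAt G c) :
    SymmContinuousAt (fun t => F t - G t) c := by
  simpa only [SymmContinuousAt, sub_sub_sub_comm, sub_zero] using Tendsto.sub hF hG

lemma const_mul {F : ℝ → ℝ} (r : ℝ) (hF : SymmContinuousAt F c) :
    SymmContinuousAt (fun t => r * F t) c := by
  simpa only [SymmContinuousAt, mul_sub, mul_zero] using Tendsto.const_mul r hF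

end SymmContinuousAt

lemma symmContinuousAt_log_sub (b c : ℝ) : SymmContinuousAt (fun t => Real.log (t - b)) c := by
  obtain rfl | hcb := eq_or_ne c b
  · simp [SymmContinuousAt]
  · exact .of_continuousAt (ContinuousAt.log (by fun_prop) (sub_ne_zero.mpr hcb))

end SymmContinuousAt

section PrincipalValue

lemma Ioo_diff_Ioo_union_Ioo {α : Type*} [LinearOrder α] {u x x' y y' v : α}
    (hux : u ≤ x) (hx : x < x') (hxy : x' ≤ y) (hy : y < y') (hyv : y' ≤ v) :
    Ioo u v \ (Ioo y y' ∪ Ioo x x') = Ioc u x ∪ Icc x' y ∪ Ico y' v := by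
  ext t
  simp only [Set.mem_sdiff, mem_union, mem_Ioo, mem_Ioc, mem_Icc, mem_Ico]
  grind

variable {E : Type*} [NormedAddCommGroup E] [NormedSpace ℝ E] [CompleteSpace E]
  {F f : ℝ → E} {u v : ℝ}

lemma setIntegral_Icc_eq_sub_of_hasDerivAt (huv : u ≤ v)
    (hderiv : ∀ t ∈ Icc u v, HasDerivAt F (f t) t) (hf : IntegrableOn f (Icc u v)) :
    ∫ t in Icc u v, f t = F v - F u := by
  rw [integral_Icc_eq_integral_Ioc, ← intervalIntegral.integral_of_le huv]
  refine intervalIntegral.integral_eq_sub_of_hasDerivAt (by rwa [uIcc_of_le huv]) ?_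
  rwa [intervalIntegrable_iff_integrableOn_Icc_of_le huv]

lemma setIntegral_Ioo_diff_Ioo_union_Ioo_of_hasDerivAt {x x' y y' : ℝ}
    (hux : u ≤ x) (hx : x < x') (hxy : x' ≤ y) (hy : y < y') (hyv : y' ≤ v)
    (hderiv : ∀ t ∈ Icc u x ∪ Icc x' y ∪ Icc y' v, HasDerivAt F (f t) t)
    (hf : IntegrableOn f (Icc u x ∪ Icc x' y ∪ Icc y' v)) :
    ∫ t in Ioo u v \ (Ioo y y' ∪ Ioo x x'), f t =
      F v - F u - (F x' - F x) - (F y' - F y) := by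
  obtain ⟨⟨hf₁, hf₂⟩, hf₃⟩ := by simpa only [integrableOn_union] using hf
  have hf₁' : IntegrableOn f (Ioc u x) := hf₁.mono_set Ioc_subset_Icc_self
  have hf₃' : IntegrableOn f (Ico y' v) := hf₃.mono_set Ico_subset_Icc_self
  have hdisj₁₂ : Disjoint (Ioc u x) (Icc x' y) :=
    disjoint_left.mpr fun _ h₁ h₂ => (h₁.2.trans_lt hx).not_ge h₂.1
  have hdisj₃ : Disjoint (Ioc u x ∪ Icc x' y) (Ico y' v) := by
    refine disjoint_left.mpr fun t h₁₂ h₃ => (hy.trans_le h₃.1).not_ge ?_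
    exact h₁₂.elim (fun h => h.2.trans (hx.le.trans hxy)) fun h => h.2
  rw [Ioo_diff_Ioo_union_Ioo hux hx hxy hy hyv,
    setIntegral_union hdisj₃ measurableSet_Ico (hf₁'.union hf₂) hf₃',
    setIntegral_union hdisj₁₂ measurableSet_Icc hf₁' hf₂,
    ← integral_Icc_eq_integral_Ioc, ← integral_Icc_eq_integral_Ico,
    setIntegral_Icc_eq_sub_of_hasDerivAt hux (fun t ht => hderiv t (.inl (.inl ht))) hf₁,
    setIntegral_Icc_eq_sub_of_hasDerivAt hxy (fun t ht => hderiv t (.inl (.inr ht))) hf₂,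
    setIntegral_Icc_eq_sub_of_hasDerivAt hyv (fun t ht => hderiv t (.inr ht)) hf₃]
  abel

theorem tendsto_pv_integral_of_hasDerivAt_of_symmContinuousAt {p q : ℝ}
    (hup : u < p) (hpq : p < q) (hqv : q < v)
    (hderiv : ∀ t ∈ Icc u v \ {p, q}, HasDerivAt F (f t) t)
    (hf : LocallyIntegrableOn f (Icc u v \ {p, q}))
    (hp : SymmContinuousAt F p) (hq : SymmContinuousAt F q) :
    Tendsto (fun ε => ∫ t in Ioo u v \ (Ioo (q - ε) (q + ε) ∪ Ioo (p - ε) (p + ε)), f t)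
      (𝓝[>] 0) (𝓝 (F v - F u)) := by
  have hlim : Tendsto
      (fun ε => F v - F u - (F (p + ε) - F (p - ε)) - (F (q + ε) - F (q - ε)))
      (𝓝[>] 0) (𝓝 (F v - F u)) := by
    simpa only [sub_zero] using (Tendsto.const_sub (F v - F u) hp).sub hq
  refine hlim.congr' ?_
  have hsmall {r : ℝ} (hr : 0 < r) : ∀ᶠ ε in 𝓝[>] (0 : ℝ), ε < r :=
    eventually_nhdsWithin_of_eventually_nhds (eventually_lt_nhds hr)
  filter_upwards [self_mem_nhdsWithin, hsmall (sub_pos.mpr hup),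
    hsmall (half_pos (sub_pos.mpr hpq)), hsmall (sub_pos.mpr hqv)] with ε hε hεu hεpq hεv
  rw [mem_Ioi] at hε
  have hsub : Icc u (p - ε) ∪ Icc (p + ε) (q - ε) ∪ Icc (q + ε) v ⊆ Icc u v \ {p, q} := by
    intro t
    simp only [mem_union, mem_Icc, Set.mem_sdiff, mem_insert_iff, mem_singleton_iff]
    grind
  refine (setIntegral_Ioo_diff_Ioo_union_Ioo_of_hasDerivAt (by linarith) (by linarith)
    (by linarith) (by linarith) (by linarith) (fun t ht => hderiv t (hsub ht)) ?_).symm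
  exact hf.integrableOn_compact_subset hsub
    ((isCompact_Icc.union isCompact_Icc).union isCompact_Icc)

end PrincipalValue

section EvenPow

open Finset (range)

/-- The odd antiderivative of `t ^ (2 * n) / (a ^ 2 - t ^ 2)` off its poles `t = ±a`. Since
`Real.log x = log |x|`, one formula covers all three components of the complement of the poles. -/
noncomputable def evenPowDivSqSubSqPrimitive (n : ℕ) (a t : ℝ) : ℝ :=
  a ^ (2 * n) / (2 * a) * (Real.log (t - -a) - Real.log (t - a)) -
    ∑ k ∈ range n, a ^ (2 * (n - 1 - k)) * (t ^ (2 * k + 1) / (2 * k + 1))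

lemma sq_sub_sq_ne_zero {a t : ℝ} (hneg : t ≠ -a) (hpos : t ≠ a) : a ^ 2 - t ^ 2 ≠ 0 := by
  rw [sub_ne_zero, Ne, eq_comm, sq_eq_sq_iff_eq_or_eq_neg]
  exact not_or.mpr ⟨hpos, hneg⟩

lemma even_pow_div_sq_sub_sq_eq {a t : ℝ} (n : ℕ) (ha : a ≠ 0) (hneg : t ≠ -a) (hpos : t ≠ a) :
    t ^ (2 * n) / (a ^ 2 - t ^ 2) =
      a ^ (2 * n) / (2 * a) * (1 / (t - -a) - 1 / (t - a)) -
        ∑ k ∈ range n, a ^ (2 * (n - 1 - k)) * t ^ (2 * k) := by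
  have hden := sq_sub_sq_ne_zero hneg hpos
  have hneg' := sub_ne_zero.mpr hneg
  have hpos' := sub_ne_zero.mpr hpos
  have hfrac : 1 / (2 * a) * (1 / (t - -a) - 1 / (t - a)) = 1 / (a ^ 2 - t ^ 2) := by
    field_simp
    ring
  set S := ∑ k ∈ range n, a ^ (2 * (n - 1 - k)) * t ^ (2 * k) with hS
  have hgeom : S * (a ^ 2 - t ^ 2) = a ^ (2 * n) - t ^ (2 * n) := by
    have h := geom_sum₂_mul (t ^ 2) (a ^ 2) n
    simp only [← pow_mul, mul_comm (t ^ _), ← hS] at h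
    linear_combination -h
  calc t ^ (2 * n) / (a ^ 2 - t ^ 2)
      = (a ^ (2 * n) - S * (a ^ 2 - t ^ 2)) / (a ^ 2 - t ^ 2) := by rw [hgeom, sub_sub_cancel]
    _ = a ^ (2 * n) * (1 / (a ^ 2 - t ^ 2)) - S := by
      rw [sub_div, mul_div_cancel_right₀ _ hden, mul_one_div]
    _ = a ^ (2 * n) / (2 * a) * (1 / (t - -a) - 1 / (t - a)) - S := by
      rw [← hfrac, ← mul_assoc, mul_one_div]

lemma hasDerivAt_evenPowDivSqSubSqPrimitive {a t : ℝ} (n : ℕ) (ha : a ≠ 0)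
    (hneg : t ≠ -a) (hpos : t ≠ a) :
    HasDerivAt (evenPowDivSqSubSqPrimitive n a) (t ^ (2 * n) / (a ^ 2 - t ^ 2)) t := by
  have hlog {c : ℝ} (hc : t ≠ c) : HasDerivAt (fun s => Real.log (s - c)) (1 / (t - c)) t :=
    ((hasDerivAt_id t).sub_const c).log (sub_ne_zero.mpr hc)
  have hpow (k : ℕ) : HasDerivAt (fun s : ℝ => s ^ (2 * k + 1) / (2 * k + 1)) (t ^ (2 * k)) t := by
    have hk : (2 * k + 1 : ℝ) ≠ 0 := by positivity
    simpa [hk] using (hasDerivAt_pow (2 * k + 1) t).div_const (2 * k + 1 : ℝ)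
  rw [even_pow_div_sq_sub_sq_eq n ha hneg hpos]
  exact (((hlog hneg).sub (hlog hpos)).const_mul _).sub
    (HasDerivAt.fun_sum fun k _ => (hpow k).const_mul _)

lemma symmContinuousAt_evenPowDivSqSubSqPrimitive (n : ℕ) (a c : ℝ) :
    SymmContinuousAt (evenPowDivSqSubSqPrimitive n a) c :=
  (((symmContinuousAt_log_sub _ c).sub (symmContinuousAt_log_sub _ c)).const_mul _).sub
    (.of_continuousAt (by fun_prop))

lemma evenPowDivSqSubSqPrimitive_neg (n : ℕ) (a t : ℝ) :
    evenPowDivSqSubSqPrimitive n a (-t) = -evenPowDivSqSubSqPrimitive n a t := by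
  have hlog (c : ℝ) : Real.log (-t - c) = Real.log (t - -c) := by
    rw [← Real.log_neg_eq_log]
    ring_nf
  have hpow (k : ℕ) : (-t) ^ (2 * k + 1) = -t ^ (2 * k + 1) := (odd_two_mul_add_one k).neg_pow t
  simp only [evenPowDivSqSubSqPrimitive, hlog, hpow, neg_neg, neg_div, mul_neg,
    Finset.sum_neg_distrib]
  ring

theorem pv_integral_pow_six_div_sq_sub_sq_general (n : ℕ) {N a : ℝ} (ha : 0 < a) (haN : a < N) :
    Tendsto (fun ε : ℝ =>
        ∫ t in Ioo (-N) N \ (Ioo (a - ε) (a + ε) ∪ Ioo (-a - ε) (-a + ε)),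
          t ^ (2 * n) / (a ^ 2 - t ^ 2))
      (𝓝[>] 0)
      (𝓝 (a ^ (2 * n) / a * Real.log ((N + a) / (N - a)) -
        2 * ∑ k ∈ range n, a ^ (2 * (n - 1 - k)) * (N ^ (2 * k + 1) / (2 * k + 1)))) := by
  have hpoles {t : ℝ} (ht : t ∈ Icc (-N) N \ {-a, a}) : t ≠ -a ∧ t ≠ a := by
    simpa only [mem_insert_iff, mem_singleton_iff, not_or] using ht.2
  have hcont : ContinuousOn (fun t : ℝ => t ^ (2 * n) / (a ^ 2 - t ^ 2)) (Icc (-N) N \ {-a, a}) :=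
    .div (by fun_prop) (by fun_prop) fun t ht => sq_sub_sq_ne_zero (hpoles ht).1 (hpoles ht).2
  have hmeas : MeasurableSet (Icc (-N) N \ {-a, a}) :=
    measurableSet_Icc.diff (toFinite _).measurableSet
  convert tendsto_pv_integral_of_hasDerivAt_of_symmContinuousAt (neg_lt_neg haN)
    (neg_lt_self ha) haN
    (fun t ht => hasDerivAt_evenPowDivSqSubSqPrimitive n ha.ne' (hpoles ht).1 (hpoles ht).2)
    (hcont.locallyIntegrableOn hmeas) (symmContinuousAt_evenPowDivSqSubSqPrimitive n a _)
    (symmContinuousAt_evenPowDivSqSubSqPrimitive n a _) using 2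
  rw [evenPowDivSqSubSqPrimitive_neg, evenPowDivSqSubSqPrimitive,
    Real.log_div (by linarith) (by linarith), sub_neg_eq_add N a]
  ring

end EvenPow

/-- For `0 < ξ₁ < N`, the principal value integral
`T_{6,N}(ξ₁) = p.v.∫_{-N}^{N} t⁶/(ξ₁² - t²) dt` exists and equals
`-(2/5)N⁵ - (2/3)ξ₁²N³ - 2ξ₁⁴N + ξ₁⁵ · ln((N + ξ₁)/(N - ξ₁))`. -/
theorem pv_integral_pow_six_div_sq_sub_sq (N ξ₁ : ℝ) (h0 : 0 < ξ₁) (hN : ξ₁ < N) :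
    Tendsto (fun ε : ℝ =>
        ∫ t in Ioo (-N) N \ (Ioo (ξ₁ - ε) (ξ₁ + ε) ∪ Ioo (-ξ₁ - ε) (-ξ₁ + ε)),
          t ^ 6 / (ξ₁ ^ 2 - t ^ 2))
      (nhdsWithin 0 (Ioi 0))
      (nhds (-(2 / 5) * N ^ 5 - (2 / 3) * ξ₁ ^ 2 * N ^ 3 - 2 * ξ₁ ^ 4 * N +
        ξ₁ ^ 5 * Real.log ((N + ξ₁) / (N - ξ₁)))) := by
  convert pv_integral_pow_six_div_sq_sub_sq_general 3 h0 hN using 2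
  simp only [Finset.sum_range_succ, Finset.sum_range_zero]
  field_simp
  grind
end

section
/- Let φ : ℝ² → ℂ be a Schwartz function and let n ≥ 1 be a natural number. Then lim_{N → ∞} ∫_{-N}^{N} (∂₂^{2n} φ)(ξ₁, 0) · ξ₁^{2n-1} · ln((N - ξ₁)/(N + ξ₁)) dξ₁ = 0. (This is the paper's claim that in the sharp decomposition of (K_a, φ) the summand containing the logarithmic factor does not contribute in the limit N → ∞.) -/
open MeasureTheory Filter Set

/-!
Let `f ξ₁` be `ξ₁ ^ (2 * n - 1)` times the partial derivative at `(ξ₁, 0)`. The substitution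
`ξ₁ = N * u` turns the integral into `∫ u in -1..1, (log ((1 - u) / (1 + u)) / u) • g (N * u)`,
where `g x = x • f x` is bounded and vanishes at infinity. The kernel is integrable because
`log ((1 - u) / (1 + u)) = -2 * artanh u` and `|artanh u| ≤ |sinh (artanh u)| = |u| / √(1 - u ^ 2)`,
so dominated convergence applies.
-/

open scoped LineDeriv SchwartzMap ZeroAtInfty

lemma log_one_sub_div_one_add {u : ℝ} (hu : u ∈ Icc (-1) 1) :
    Real.log ((1 - u) / (1 + u)) = -2 * Real.artanh u := by
  rw [Real.artanh_eq_half_log hu, ← inv_div, Real.log_inv]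
  ring

lemma abs_artanh_le_abs_mul_sqrt_inv {u : ℝ} (hu : u ∈ Ioo (-1) 1) :
    |Real.artanh u| ≤ |u| * √(1 - u ^ 2)⁻¹ := by
  calc |Real.artanh u| ≤ Real.sinh |Real.artanh u| := Real.self_le_sinh_iff.2 (abs_nonneg _)
    _ = |u / √(1 - u ^ 2)| := by rw [← Real.abs_sinh, Real.sinh_artanh hu]
    _ = |u| * √(1 - u ^ 2)⁻¹ := by
      rw [abs_div, abs_of_nonneg (Real.sqrt_nonneg _), Real.sqrt_inv, div_eq_mul_inv]

lemma intervalIntegrable_log_one_sub_div_one_add_div :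
    IntervalIntegrable (fun u : ℝ => Real.log ((1 - u) / (1 + u)) / u) volume (-1) 1 := by
  have hdom := Polynomial.Chebyshev.intervalIntegrable_sqrt_one_sub_sq_inv.const_mul 2
  rw [intervalIntegrable_iff_integrableOn_Ioo_of_le (by norm_num)] at hdom ⊢
  refine hdom.mono' (Measurable.aestronglyMeasurable (by fun_prop)) ?_
  filter_upwards [ae_restrict_mem measurableSet_Ioo] with u hu
  rw [log_one_sub_div_one_add (Ioo_subset_Icc_self hu), Real.norm_eq_abs, abs_div, abs_mul]
  refine div_le_of_le_mul₀ (abs_nonneg u) (by positivity) ?_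
  calc |(-2 : ℝ)| * |Real.artanh u| ≤ 2 * (|u| * √(1 - u ^ 2)⁻¹) := by
        gcongr
        · norm_num
        · exact abs_artanh_le_abs_mul_sqrt_inv hu
    _ = 2 * √(1 - u ^ 2)⁻¹ * |u| := by ring

variable {F : Type*} [NormedAddCommGroup F] [NormedSpace ℝ F]

lemma tendsto_integral_smul_comp_mul_zero {μ : Measure ℝ} [NullSingletonClass μ] {k : ℝ → ℝ}
    (hk : Integrable k μ) (g : C₀(ℝ, F)) :
    Tendsto (fun N : ℝ => ∫ u, k u • g (N * u) ∂μ) atTop (nhds 0) := by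
  rw [← integral_zero ℝ F (μ := μ)]
  refine tendsto_integral_filter_of_dominated_convergence (fun u => ‖k u‖ * ‖g.toBCF‖)
    (.of_forall fun N => ?_) (.of_forall fun N => .of_forall fun u => ?_)
    (hk.norm.mul_const _) ?_
  · exact hk.aestronglyMeasurable.smul
      (g.continuous.comp (continuous_const_mul N)).aestronglyMeasurable
  · rw [norm_smul]
    gcongr
    exact g.toBCF.norm_coe_le_norm (N * u)
  · filter_upwards [μ.ae_ne 0] with u hu
    have hscale : Tendsto (fun N : ℝ => N * u) atTop (cocompact ℝ) := by
      rw [← Metric.cobounded_eq_cocompact, ← tendsto_norm_atTop_iff_cobounded]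
      simp only [norm_mul]
      exact tendsto_norm_atTop_atTop.atTop_mul_const (norm_pos_iff.2 hu)
    simpa only [smul_zero, Function.comp_apply] using
      ((zero_at_infty g).comp hscale).const_smul (k u)

lemma integral_log_sub_div_add_smul {N : ℝ} (hN : N ≠ 0) (f : ℝ → F) :
    ∫ x in (-N)..N, Real.log ((N - x) / (N + x)) • f x =
      ∫ u in (-1)..1, (Real.log ((1 - u) / (1 + u)) / u) • ((N * u) • f (N * u)) := by
  have hsubst := intervalIntegral.smul_integral_comp_mul_left (a := -1) (b := 1)
    (fun x => Real.log ((N - x) / (N + x)) • f x) N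
  rw [mul_neg_one, mul_one] at hsubst
  rw [← hsubst, ← intervalIntegral.integral_smul]
  refine intervalIntegral.integral_congr fun u _ => ?_
  have hratio : (N - N * u) / (N + N * u) = (1 - u) / (1 + u) := by
    rw [← mul_one_sub, ← mul_one_add, mul_div_mul_left _ _ hN]
  rcases eq_or_ne u 0 with rfl | hu
  · simp
  · simp only [hratio, smul_smul]
    congr 1
    field_simp

lemma tendsto_integral_log_sub_div_add_smul_zero {f : ℝ → F} {g : C₀(ℝ, F)}
    (hg : ∀ x, g x = x • f x) :
    Tendsto (fun N : ℝ => ∫ x in (-N)..N, Real.log ((N - x) / (N + x)) • f x)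
      atTop (nhds 0) := by
  refine (tendsto_integral_smul_comp_mul_zero (μ := volume.restrict (Ioc (-1) 1))
    intervalIntegrable_log_one_sub_div_one_add_div.1 g).congr' ?_
  filter_upwards [eventually_ne_atTop 0] with N hN
  rw [integral_log_sub_div_add_smul hN, intervalIntegral.integral_of_le (by norm_num)]
  simp only [hg]

lemma iteratedDeriv_comp_prodMk_left {𝕜 E G : Type*} [NontriviallyNormedField 𝕜]
    [NormedAddCommGroup E] [NormedSpace 𝕜 E] [NormedAddCommGroup G] [NormedSpace 𝕜 G]
    {φ : E × 𝕜 → G} {m : ℕ} (hφ : ContDiff 𝕜 m φ) (x : E) (y : 𝕜) :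
    iteratedDeriv m (fun t => φ (x, t)) y = iteratedFDeriv 𝕜 m φ (x, y) fun _ => (0, 1) := by
  have hslice : (fun t => φ (x, t)) =
      (fun z => φ (z + (x, 0))) ∘ ContinuousLinearMap.inr 𝕜 E 𝕜 := by
    ext t
    simp
  have htranslate : ContDiff 𝕜 m fun z => φ (z + (x, 0)) := hφ.comp (by fun_prop)
  rw [iteratedDeriv_eq_iteratedFDeriv, hslice,
    ContinuousLinearMap.iteratedFDeriv_comp_right _ htranslate _ le_rfl,
    iteratedFDeriv_comp_add_right]
  simp

lemma exists_schwartzMap_eq_iteratedDeriv_snd {E : Type*} [NormedAddCommGroup E] [NormedSpace ℝ E]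
    (φ : 𝓢(E × ℝ, F)) (m : ℕ) (y : ℝ) :
    ∃ f : 𝓢(E, F), ∀ x, f x = iteratedDeriv m (fun t => φ (x, t)) y := by
  have hgrowth : (fun x : E => (x, y)).HasTemperateGrowth := by
    have haffine : (fun x : E => (x, y)) =
        fun x => ContinuousLinearMap.inl ℝ E ℝ x + (0, y) := by ext <;> simp
    rw [haffine]
    fun_prop
  have hanti : AntilipschitzWith 1 fun x : E => (x, y) :=
    (Isometry.of_dist_eq fun a b => by simp [Prod.dist_eq]).antilipschitz
  refine ⟨SchwartzMap.compCLMOfAntilipschitz ℝ hgrowth hanti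
    (∂^{fun _ : Fin m => ((0 : E), (1 : ℝ))} φ), fun x => ?_⟩
  rw [SchwartzMap.compCLMOfAntilipschitz_apply, Function.comp_apply,
    SchwartzMap.iteratedLineDerivOp_eq_iteratedFDeriv,
    iteratedDeriv_comp_prodMk_left (φ.smooth m)]

theorem tendsto_log_summand_zero_general (φ : 𝓢(ℝ × ℝ, F)) (m k : ℕ) (y : ℝ) :
    Tendsto (fun N : ℝ =>
        ∫ x in (-N)..N,
          (x ^ k * Real.log ((N - x) / (N + x))) • iteratedDeriv m (fun t => φ (x, t)) y)
      atTop (nhds 0) := by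
  obtain ⟨f, hf⟩ := exists_schwartzMap_eq_iteratedDeriv_snd φ m y
  let g : 𝓢(ℝ, F) := SchwartzMap.smulLeftCLM F (fun x : ℝ => x ^ (k + 1)) f
  have hg (x : ℝ) : g.toZeroAtInfty x = x • x ^ k • iteratedDeriv m (fun t => φ (x, t)) y := by
    rw [SchwartzMap.toZeroAtInfty_apply, SchwartzMap.smulLeftCLM_apply_apply (by fun_prop), hf,
      smul_smul, pow_succ']
  simpa only [smul_smul, mul_comm] using tendsto_integral_log_sub_div_add_smul_zero hg

/-- For a Schwartz function `φ : ℝ² → ℂ` and `n ≥ 1`,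
`lim_{N → ∞} ∫_{-N}^{N} (∂₂^{2n} φ)(ξ₁, 0) · ξ₁^{2n-1} · ln((N - ξ₁)/(N + ξ₁)) dξ₁ = 0`:
the logarithmic summand of the sharp decomposition of `(K_a, φ)` does not contribute
in the limit `N → ∞`. -/
theorem tendsto_log_summand_zero (φ : SchwartzMap (ℝ × ℝ) ℂ) (n : ℕ) (hn : 1 ≤ n) :
    Tendsto (fun N : ℝ =>
        ∫ ξ₁ in (-N)..N,
          iteratedDeriv (2 * n) (fun y : ℝ => φ (ξ₁, y)) 0 *
            ((ξ₁ ^ (2 * n - 1) * Real.log ((N - ξ₁) / (N + ξ₁)) : ℝ) : ℂ))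
      atTop (nhds 0) := by
  simpa only [Complex.real_smul, mul_comm] using
    tendsto_log_summand_zero_general φ (2 * n) (2 * n - 1) 0
end
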